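/- Let k be a field, S = k⟨x₁,…,x_m⟩ the free associative k-algebra, I ⊆ S the two-sided ideal generated by f¹,…,f^r, and A = S/I. Let p₁, p₂ ∈ k^m be points at which every element of I evaluates to zero, so that the 1-dimensional A-modules k(p₁) and k(p₂) are defined. For each j write f^j = ∑_{i=1}^m g_{j,i}·(x_i − (p₁)_i) (the unique left decomposition of f^j at p₁), and let J ∈ M_{r×m}(k) be the matrix with entries J_{j,i} = ε_{p₂}(g_{j,i}). Then: if p₁ ≠ p₂, dim_k Ext¹_A(k(p₁), k(p₂)) = m − 1 − rank(J); and if p₁ = p₂, dim_k Ext¹_A(k(p₁), k(p₁)) = m − rank(J). -/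

import Mathlib

/-!
Applying `Hom(-, N)` to `0 → 𝔪 → A → k(p₁) → 0`, where `𝔪` is the augmentation ideal of `p₁`,
identifies `Ext¹(k(p₁), N)` with the cokernel of the restriction `Hom(A, N) → Hom(𝔪, N)`. For
`N = k(p₂)`, a homomorphism `𝔪 → N` is determined by its values on the generators `xᵢ - (p₁)ᵢ`
of `𝔪`; the relation `fʲ = ∑ᵢ gⱼᵢ (xᵢ - (p₁)ᵢ)` forces the vector of these values into `ker J`.
Conversely, if `J c = 0`, then `xᵢ ↦ !![(p₂)ᵢ, cᵢ; 0, (p₁)ᵢ]` is a representation of `A`, and its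
upper right entry restricts to a homomorphism on `𝔪` with values `c`. So `Hom(𝔪, k(p₂))` is
`ker J`, in which the restrictions from `A` span the multiples of `p₂ - p₁`.
-/

open CategoryTheory Opposite

noncomputable section

/-- Evaluation of a noncommutative polynomial in `m` variables at a point of `kᵐ`. -/
def evalAt (k : Type) [Field k] (m : ℕ) (p : Fin m → k) : FreeAlgebra k (Fin m) →ₐ[k] k :=
  FreeAlgebra.lift k p

/-- The quotient algebra `k⟨x₁,…,x_m⟩/(f¹,…,fʳ)` of the free algebra by the two-sided
ideal generated by the family `f`. -/
abbrev quotAlgF (k : Type) [Field k] (m r : ℕ) (f : Fin r → FreeAlgebra k (Fin m)) : Type :=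
  RingQuot (fun a b : FreeAlgebra k (Fin m) => (∃ j, a = f j) ∧ b = 0)

/-- The one-dimensional representation of `A = k⟨x₁,…,x_m⟩/(f¹,…,fʳ)` given by a point `p`
at which the defining ideal vanishes. -/
def pointHomF (k : Type) [Field k] (m r : ℕ) (f : Fin r → FreeAlgebra k (Fin m))
    (p : Fin m → k) (h : ∀ j, evalAt k m p (f j) = 0) : quotAlgF k m r f →ₐ[k] k :=
  RingQuot.liftAlgHom k ⟨evalAt k m p, by
    rintro a b ⟨⟨j, rfl⟩, rfl⟩
    simpa using h j⟩

/-- The one-dimensional module `k(p)` over `k⟨x₁,…,x_m⟩/(f¹,…,fʳ)`. -/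
def pointModF (k : Type) [Field k] (m r : ℕ) (f : Fin r → FreeAlgebra k (Fin m))
    (p : Fin m → k) (h : ∀ j, evalAt k m p (f j) = 0) : ModuleCat (quotAlgF k m r f) :=
  letI : Module (quotAlgF k m r f) k := Module.compHom k (pointHomF k m r f p h).toRingHom
  ModuleCat.of (quotAlgF k m r f) k

/-- `Ext¹` of modules over the `k`-algebra `A` (as a `k`-vector space). -/
def Ext1 (k : Type) [Field k] (A : Type) [Ring A] [Algebra k A] (M N : ModuleCat A) :
    ModuleCat k :=
  ((Ext k (ModuleCat A) 1).obj (op M)).obj N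

universe v u w

section DimensionShift

open Limits

variable {C : Type u} [Category.{v} C] [Abelian C]

/-- The projective resolution of `X` given by an exact complex of projectives together with an
augmentation `ε` onto `X`. -/
def projectiveResolutionOfExact {X : C} (K : ChainComplex C ℕ) (hproj : ∀ n, Projective (K.X n))
    (ε : K.X 0 ⟶ X) (w : K.d 1 0 ≫ ε = 0) [hε : Epi ε] (h₀ : (ShortComplex.mk _ _ w).Exact)
    (hK : ∀ n, K.ExactAt (n + 1)) : ProjectiveResolution X where
  complex := K
  projective := hproj
  π := (ChainComplex.toSingle₀Equiv K X).symm ⟨ε, w⟩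
  quasiIso := ⟨fun
    | 0 => by
      rw [ChainComplex.quasiIsoAt₀_iff,
        ShortComplex.quasiIso_iff_of_zeros' _ (K.shape _ _ (by simp)) rfl rfl]
      have hf := ChainComplex.toSingle₀Equiv_symm_apply_f_zero ε w
      refine (ShortComplex.exact_and_epi_g_iff_of_iso ?_).2 ⟨h₀, hε⟩
      exact ShortComplex.isoMk (Iso.refl (K.X 1)) (Iso.refl (K.X 0)) (Iso.refl X)
        ((Category.id_comp _).trans (Category.comp_id _).symm)
        ((Category.id_comp _).trans (hf.symm.trans (Category.comp_id _).symm))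
    | n + 1 => by
      rw [quasiIsoAt_iff_exactAt' _ _ (ChainComplex.exactAt_succ_single_obj X n)]
      exact hK n⟩

lemma exact_comp_mono {X Y Z W : C} {f : X ⟶ Y} {g : Y ⟶ Z} {w : f ≫ g = 0}
    (h : (ShortComplex.mk f g w).Exact) (i : Z ⟶ W) [Mono i] (w' : f ≫ g ≫ i = 0) :
    (ShortComplex.mk f (g ≫ i) w').Exact :=
  (ShortComplex.exact_iff_of_epi_of_isIso_of_mono
    (S₁ := .mk f g w) (S₂ := .mk f (g ≫ i) w') { τ₁ := 𝟙 X, τ₂ := 𝟙 Y, τ₃ := i }).1 h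

lemma exact_epi_comp {X Y Z W : C} {f : X ⟶ Y} {g : Y ⟶ Z} {w : f ≫ g = 0}
    (h : (ShortComplex.mk f g w).Exact) (p : W ⟶ X) [Epi p] (w' : (p ≫ f) ≫ g = 0) :
    (ShortComplex.mk (p ≫ f) g w').Exact :=
  (ShortComplex.exact_iff_of_epi_of_isIso_of_mono
    (S₁ := .mk (p ≫ f) g w') (S₂ := .mk f g w) { τ₁ := p, τ₂ := 𝟙 Y, τ₃ := 𝟙 Z }).2 h

/-- The augmentation `P₀ ⟶ X` of a projective resolution; its target is `X` itself, where that of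
`P.π.f 0` is the degree-zero term of a single complex. -/
def resolutionMap {X : C} (P : ProjectiveResolution X) : P.complex.X 0 ⟶ X := P.π.f 0

instance epi_resolutionMap {X : C} (P : ProjectiveResolution X) : Epi (resolutionMap P) :=
  inferInstanceAs (Epi (P.π.f 0))

lemma d_comp_resolutionMap {X : C} (P : ProjectiveResolution X) :
    P.complex.d 1 0 ≫ resolutionMap P = 0 := P.complex_d_comp_π_f_zero

lemma exact_resolutionMap {X : C} (P : ProjectiveResolution X) :
  (ShortComplex.mk _ _ (d_comp_resolutionMap P)).Exact := P.exact₀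

/-- The complex `⋯ ⟶ P₁ ⟶ P₀ ⟶ X₂` obtained by splicing a resolution of `X₁` with `X₁ ⟶ X₂`; the
term `X₂` sits in degree `0`, so that `Pₙ` sits in degree `n + 1`. -/
def spliceComplex (S : ShortComplex C) (P : ProjectiveResolution S.X₁) : ChainComplex C ℕ :=
  P.complex.augment (resolutionMap P ≫ S.f) (by
    rw [← Category.assoc, d_comp_resolutionMap, zero_comp])

lemma spliceComplex_exactAt_succ (S : ShortComplex C) [Mono S.f]
    (P : ProjectiveResolution S.X₁) : ∀ n, (spliceComplex S P).ExactAt (n + 1)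
  | 0 => by
    rw [HomologicalComplex.exactAt_iff' _ 2 1 0 (by simp) (by simp)]
    exact exact_comp_mono (exact_resolutionMap P) S.f _
  | n + 1 => by
    rw [HomologicalComplex.exactAt_iff' _ (n + 3) (n + 2) (n + 1) (by simp) (by simp)]
    exact P.exact_succ n

/-- The resolution of `X₃` obtained from a short exact sequence with projective middle term and
a resolution of its kernel `X₁`. -/
def spliceProjectiveResolution {S : ShortComplex C} (hS : S.ShortExact) [hS₂ : Projective S.X₂]
    (P : ProjectiveResolution S.X₁) : ProjectiveResolution S.X₃ :=
  have := hS.mono_f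
  have w : (resolutionMap P ≫ S.f) ≫ S.g = 0 := by rw [Category.assoc, S.zero, comp_zero]
  projectiveResolutionOfExact (spliceComplex S P)
    (fun
      | 0 => hS₂
      | n + 1 => P.projective n)
    S.g w (hε := hS.epi_g) (exact_epi_comp hS.exact (resolutionMap P) w)
    (spliceComplex_exactAt_succ S P)

lemma range_leftComp_eq_ker (R : Type*) [Semiring R] [Linear R C] {X Y Z : C}
    {f : X ⟶ Y} {g : Y ⟶ Z} {w : f ≫ g = 0} (h : (ShortComplex.mk f g w).Exact) [Epi g] (N : C) :
    LinearMap.range (Linear.leftComp R N g) = LinearMap.ker (Linear.leftComp R N f) := by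
  refine le_antisymm ?_ fun φ hφ => ⟨h.desc φ hφ, h.g_desc φ hφ⟩
  rintro _ ⟨ψ, rfl⟩
  simp [reassoc_of% w]

/-- The homology of `T` as a cokernel: if `j` identifies `V` with the cycles of `T` and `δ` is
the resulting map from `T.X₁` to `V`, the homology is `V ⧸ range δ`. -/
def homologyEquivQuotientRange {R : Type*} [Ring R] (T : ShortComplex (ModuleCat.{v} R))
    {V : Type*} [AddCommGroup V] [Module R V] (j : V →ₗ[R] T.X₂) (hj : Function.Injective j)
    (hrange : LinearMap.range j = LinearMap.ker T.g.hom) (δ : T.X₁ →ₗ[R] V)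
    (hδ : j ∘ₗ δ = T.f.hom) : T.homology ≃ₗ[R] V ⧸ LinearMap.range δ :=
  T.moduleCatHomologyIso.toLinearEquiv ≪≫ₗ
    (Submodule.Quotient.equiv (LinearMap.range δ) (LinearMap.range T.moduleCatToCycles)
      (LinearEquiv.ofInjective j hj ≪≫ₗ LinearEquiv.ofEq _ _ hrange) (by
        rw [← LinearMap.range_comp]
        congr 1
        ext x
        exact LinearMap.congr_fun hδ x)).symm

/-- Dimension shift: `Ext¹(X₃, N)` is the cokernel of `Hom(X₂, N) → Hom(X₁, N)` for a short exact
sequence with projective middle term. -/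
def extOneEquivQuotientRange (R : Type w) [Ring R] [Linear R C] [EnoughProjectives C]
    {S : ShortComplex C} (hS : S.ShortExact) [Projective S.X₂] (N : C) :
    ((Ext R C 1).obj (op S.X₃)).obj N ≃ₗ[R]
      (S.X₁ ⟶ N) ⧸ LinearMap.range (Linear.leftComp R N S.f) :=
  let P := projectiveResolution S.X₁
  let Q := spliceProjectiveResolution hS P
  let e := Q.isoExt (R := R) 1 N ≪≫ HomologicalComplex.homologyIsoSc' _ 0 1 2 (by simp) (by simp)
  e.toLinearEquiv ≪≫ₗ
    homologyEquivQuotientRange ((Q.complex.linearYonedaObj R N).sc' 0 1 2)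
      (Linear.leftComp R N (resolutionMap P) : (S.X₁ ⟶ N) →ₗ[R] (P.complex.X 0 ⟶ N))
      (fun _ _ h => (cancel_epi (resolutionMap P)).1 h)
      (range_leftComp_eq_ker R (exact_resolutionMap P) N)
      (Linear.leftComp R N S.f : (S.X₂ ⟶ N) →ₗ[R] (S.X₁ ⟶ N))
      (LinearMap.ext fun _ => (Category.assoc _ _ _).symm)

end DimensionShift

section Characters

open scoped ModuleCat

variable {k A : Type u} [Field k] [Ring A] [Algebra k A]

/-- The one-dimensional `A`-module on which `A` acts through the character `ε`. -/
def charModule (ε : A →ₐ[k] k) : ModuleCat.{u} A :=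
  letI : Module A k := Module.compHom k ε.toRingHom
  ModuleCat.of A k

/-- The underlying `k`-vector space of `charModule ε` is `k`. -/
def charModuleEquiv (ε : A →ₐ[k] k) : charModule ε ≃ₗ[k] k :=
  { AddEquiv.refl k with
    map_smul' := fun c x => congrArg (· * (show k from x)) (ε.commutes c) }

lemma charModuleEquiv_smul (ε : A →ₐ[k] k) (a : A) (x : charModule ε) :
    charModuleEquiv ε (a • x) = ε a * charModuleEquiv ε x := rfl

/-- The quotient map `A → charModule ε`, `a ↦ a • 1`. -/
def charProjection (ε : A →ₐ[k] k) : A →ₗ[A] charModule ε :=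
  LinearMap.toSpanSingleton A _ ((charModuleEquiv ε).symm 1)

lemma charModuleEquiv_charProjection (ε : A →ₐ[k] k) (a : A) :
    charModuleEquiv ε (charProjection ε a) = ε a := by
  simp [charProjection, charModuleEquiv_smul]

lemma charProjection_surjective (ε : A →ₐ[k] k) : Function.Surjective (charProjection ε) :=
  fun x => ⟨algebraMap k A (charModuleEquiv ε x), (charModuleEquiv ε).injective (by
    rw [charModuleEquiv_charProjection, ε.commutes, Algebra.algebraMap_self_apply])⟩

/-- The kernel of the character `ε`, as a left ideal of `A`. -/
abbrev augmentationIdeal (ε : A →ₐ[k] k) : Submodule A A :=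
  LinearMap.ker (charProjection ε)

lemma mem_augmentationIdeal {ε : A →ₐ[k] k} {a : A} : a ∈ augmentationIdeal ε ↔ ε a = 0 := by
  rw [LinearMap.mem_ker, ← (charModuleEquiv ε).map_eq_zero_iff, charModuleEquiv_charProjection]

/-- The component `a - ε a` of `a` in the augmentation ideal of `ε`. -/
def recenter (ε : A →ₐ[k] k) (a : A) : augmentationIdeal ε :=
  ⟨a - algebraMap k A (ε a), mem_augmentationIdeal.2 (by simp)⟩

lemma recenter_mul (ε : A →ₐ[k] k) (a b : A) :
    recenter ε (a * b) = a • recenter ε b + algebraMap k A (ε b) • recenter ε a := by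
  ext
  simp only [recenter, Submodule.coe_add, Submodule.coe_smul, smul_eq_mul, mul_sub]
  rw [Algebra.commutes (ε b) a, map_mul ε, mul_comm (ε a), map_mul (algebraMap k A),
    sub_add_sub_cancel]

lemma span_range_recenter (ε : A →ₐ[k] k) {σ : Type*} {x : σ → A}
    (hx : Algebra.adjoin k (Set.range x) = ⊤) :
    Submodule.span A (Set.range fun i => recenter ε (x i)) = ⊤ := by
  have recenter_mem (a : A) :
      recenter ε a ∈ Submodule.span A (Set.range fun i => recenter ε (x i)) := by
    have ha : a ∈ Algebra.adjoin k (Set.range x) := hx ▸ Algebra.mem_top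
    induction ha using Algebra.adjoin_induction with
    | mem _ ha =>
      obtain ⟨i, rfl⟩ := ha
      exact Submodule.subset_span ⟨i, rfl⟩
    | algebraMap c =>
      convert Submodule.zero_mem _
      ext
      simp [recenter]
    | add a b _ _ ha hb =>
      convert Submodule.add_mem _ ha hb using 1
      ext
      simp [recenter, sub_add_sub_comm]
    | mul a b _ _ ha hb =>
      rw [recenter_mul]
      exact Submodule.add_mem _ (Submodule.smul_mem _ _ hb) (Submodule.smul_mem _ _ ha)
  refine Submodule.eq_top_iff'.2 fun a => ?_
  convert recenter_mem a
  ext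
  simp [recenter, mem_augmentationIdeal.1 a.2]

/-- The values of a homomorphism from the augmentation ideal of `ε` to `charModule δ` on the
elements `x i - ε (x i)`. -/
def evalRecentered {σ : Type*} (ε δ : A →ₐ[k] k) (x : σ → A) :
    (ModuleCat.of A (augmentationIdeal ε) ⟶ charModule δ) →ₗ[k] σ → k where
  toFun φ i := charModuleEquiv δ (φ.hom (recenter ε (x i)))
  map_add' _ _ := rfl
  map_smul' c φ := funext fun i => (charModuleEquiv δ).map_smul c (φ.hom (recenter ε (x i)))

lemma evalRecentered_injective {σ : Type*} (ε δ : A →ₐ[k] k) {x : σ → A}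
    (hx : Algebra.adjoin k (Set.range x) = ⊤) :
    Function.Injective (evalRecentered ε δ x) := fun φ ψ h => by
  ext1
  exact LinearMap.ext_on_range (span_range_recenter ε hx)
    fun i => (charModuleEquiv δ).injective (congrFun h i)

lemma map_evalRecentered_range_leftComp {σ : Type*} (ε δ : A →ₐ[k] k) (x : σ → A) :
    (LinearMap.range (Linear.leftComp k (charModule δ)
      (ModuleCat.ofHom (augmentationIdeal ε).subtype))).map (evalRecentered ε δ x) =
      Submodule.span k {fun i => δ (x i) - ε (x i)} := by
  have eval_restrict (ψ : ModuleCat.of A A ⟶ charModule δ) :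
      evalRecentered ε δ x (ModuleCat.ofHom (augmentationIdeal ε).subtype ≫ ψ) =
        charModuleEquiv δ (ψ.hom 1) • fun i => δ (x i) - ε (x i) := by
    ext i
    let y := x i - algebraMap k A (ε (x i))
    calc charModuleEquiv δ (ψ.hom y) = charModuleEquiv δ (ψ.hom (y • 1)) := by
          rw [smul_eq_mul, mul_one]
      _ = δ y * charModuleEquiv δ (ψ.hom 1) := by rw [map_smul, charModuleEquiv_smul]
      _ = charModuleEquiv δ (ψ.hom 1) * (δ (x i) - ε (x i)) := by simp [y, mul_comm]
  refine le_antisymm ?_ ((Submodule.span_singleton_le_iff_mem _ _).2 ?_)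
  · rintro _ ⟨_, ⟨ψ, rfl⟩, rfl⟩
    exact Submodule.mem_span_singleton.2 ⟨_, (eval_restrict ψ).symm⟩
  · have eval_one : charModuleEquiv δ (charProjection δ 1) = 1 := by
      rw [charModuleEquiv_charProjection, map_one]
    refine ⟨_, ⟨ModuleCat.ofHom (Y := charModule δ) (charProjection δ), rfl⟩, ?_⟩
    exact (eval_restrict _).trans ((congrArg (· • _) eval_one).trans (one_smul k _))

lemma finrank_ext_one_charModule_add {σ : Type*} [Finite σ] (ε δ : A →ₐ[k] k) {x : σ → A}
    (hx : Algebra.adjoin k (Set.range x) = ⊤) :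
    Module.finrank k (((Ext k (ModuleCat.{u} A) 1).obj (op (charModule ε))).obj (charModule δ)) +
      Module.finrank k (Submodule.span k {fun i => δ (x i) - ε (x i)}) =
      Module.finrank k (LinearMap.range (evalRecentered ε δ x)) := by
  let S := (charProjection ε).shortComplexKer
  have hS : S.ShortExact := LinearMap.shortExact_shortComplexKer (charProjection_surjective ε)
  have : Projective S.X₂ := ModuleCat.projective_of_free (Module.Basis.singleton Unit A)
  have hT := evalRecentered_injective ε δ hx
  have := Module.Finite.of_injective _ hT
  rw [LinearMap.finrank_range_of_inj hT, ← map_evalRecentered_range_leftComp ε δ x,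
    ← (Submodule.equivMapOfInjective _ hT _).finrank_eq,
    (extOneEquivQuotientRange k hS (charModule δ)).finrank_eq]
  exact Submodule.finrank_quotient_add_finrank _

/-- The upper right entry of an upper triangular representation with diagonal `(δ, ε)`, restricted
to the augmentation ideal of `ε`, where it is `A`-linear. -/
def cornerHom (ε δ : A →ₐ[k] k) (τ : A →ₐ[k] Matrix (Fin 2) (Fin 2) k)
    (hτ : ∀ a, τ a = !![δ a, τ a 0 1; 0, ε a]) : augmentationIdeal ε →ₗ[A] charModule δ where
  toFun a := (charModuleEquiv δ).symm (τ a 0 1)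
  map_add' a b := by simp
  map_smul' a b := (charModuleEquiv δ).injective (by
    have hb : ε b = 0 := mem_augmentationIdeal.1 b.2
    have := congrFun₂ (map_mul τ a b) 0 1
    rw [hτ a, hτ b] at this
    simpa [charModuleEquiv_smul, hb] using this)

end Characters

section PresentedAlgebras

variable {k σ : Type u} {ι : Type*} [Field k]

/-- The algebra with generators indexed by `σ` and relations `f j = 0`. -/
abbrev PresentedAlgebra (f : ι → FreeAlgebra k σ) : Type u :=
  RingQuot fun a b : FreeAlgebra k σ => (∃ j, a = f j) ∧ b = 0

namespace PresentedAlgebra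

variable (f : ι → FreeAlgebra k σ)

/-- The presentation map from the free algebra. -/
def mk : FreeAlgebra k σ →ₐ[k] PresentedAlgebra f := RingQuot.mkAlgHom k _

/-- The `i`-th generator of a presented algebra. -/
def gen (i : σ) : PresentedAlgebra f := mk f (FreeAlgebra.ι k i)

lemma mk_relation (j : ι) : mk f (f j) = 0 :=
  (RingQuot.mkAlgHom_rel k ⟨⟨j, rfl⟩, rfl⟩).trans (map_zero _)

lemma mk_surjective : Function.Surjective (mk f) := RingQuot.mkAlgHom_surjective k _

lemma adjoin_range_gen : Algebra.adjoin k (Set.range (gen f)) = ⊤ := by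
  have hgen : Set.range (gen f) = mk f '' Set.range (FreeAlgebra.ι k) := Set.range_comp _ _
  rw [hgen, ← AlgHom.map_adjoin, FreeAlgebra.adjoin_range_ι, Algebra.map_top,
    (AlgHom.range_eq_top _).2 (mk_surjective f)]

variable {f} {B : Type*} [Ring B] [Algebra k B]

/-- The universal property of a presented algebra: homomorphisms from the free algebra that kill
the relations descend. -/
def lift (φ : FreeAlgebra k σ →ₐ[k] B) (hφ : ∀ j, φ (f j) = 0) : PresentedAlgebra f →ₐ[k] B :=
  RingQuot.liftAlgHom k ⟨φ, by
    rintro _ _ ⟨⟨j, rfl⟩, rfl⟩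
    rw [hφ, map_zero]⟩

lemma lift_mk (φ : FreeAlgebra k σ →ₐ[k] B) (hφ : ∀ j, φ (f j) = 0) (a : FreeAlgebra k σ) :
    lift φ hφ (mk f a) = φ a :=
  RingQuot.liftAlgHom_mkAlgHom_apply k _ _ _

/-- Evaluation at a point `p` at which the relations vanish. -/
def pointChar (p : σ → k) (hp : ∀ j, FreeAlgebra.lift k p (f j) = 0) :
    PresentedAlgebra f →ₐ[k] k :=
  lift (FreeAlgebra.lift k p) hp

lemma pointChar_mk (p : σ → k) (hp : ∀ j, FreeAlgebra.lift k p (f j) = 0) (a : FreeAlgebra k σ) :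
    pointChar p hp (mk f a) = FreeAlgebra.lift k p a :=
  lift_mk _ hp a

lemma pointChar_gen (p : σ → k) (hp : ∀ j, FreeAlgebra.lift k p (f j) = 0) (i : σ) :
    pointChar p hp (gen f i) = p i :=
  (pointChar_mk p hp _).trans (FreeAlgebra.lift_ι_apply p i)

end PresentedAlgebra

end PresentedAlgebras

section TriangularRepresentations

variable {k σ ι : Type*} [CommRing k]

/-- The representation of the free algebra on `k²` extending the character of `p₁` by that of `p₂`,
with cocycle given by `c` on the generators. -/
def triangularRep (p₁ p₂ c : σ → k) : FreeAlgebra k σ →ₐ[k] Matrix (Fin 2) (Fin 2) k :=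
  FreeAlgebra.lift k fun i => !![p₂ i, c i; 0, p₁ i]

lemma triangularRep_eq (p₁ p₂ c : σ → k) (a : FreeAlgebra k σ) :
    triangularRep p₁ p₂ c a =
      !![FreeAlgebra.lift k p₂ a, triangularRep p₁ p₂ c a 0 1; 0, FreeAlgebra.lift k p₁ a] := by
  induction a using FreeAlgebra.induction with
  | grade0 t =>
    ext i j
    fin_cases i <;> fin_cases j <;> simp [Matrix.algebraMap_matrix_apply]
  | grade1 i => simp [triangularRep]
  | mul a b ha hb =>
    rw [map_mul, ha, hb]
    simp
  | add a b ha hb =>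
    rw [map_add, ha, hb]
    ext i j
    fin_cases i <;> fin_cases j <;> simp

lemma triangularRep_sum [Fintype σ] (p₁ p₂ c : σ → k) (g : σ → FreeAlgebra k σ) :
    triangularRep p₁ p₂ c
        (∑ i, g i * (FreeAlgebra.ι k i - algebraMap k (FreeAlgebra k σ) (p₁ i))) 0 1 =
      ∑ i, FreeAlgebra.lift k p₂ (g i) * c i := by
  rw [map_sum, Matrix.sum_apply]
  refine Finset.sum_congr rfl fun i _ => ?_
  rw [map_mul, triangularRep_eq p₁ p₂ c (g i)]
  simp [triangularRep, Matrix.mul_apply, Matrix.algebraMap_matrix_apply]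

/-- The left decompositions `f j = ∑ i, g j i * (x i - p i)` at the point `p`. -/
def IsLeftDecomposition [Fintype σ] (p : σ → k) (f : ι → FreeAlgebra k σ)
    (g : ι → σ → FreeAlgebra k σ) : Prop :=
  ∀ j, f j = ∑ i, g j i * (FreeAlgebra.ι k i - algebraMap k (FreeAlgebra k σ) (p i))

/-- The noncommutative Jacobi matrix, evaluated at `p`, of a family of relations whose left
decompositions have coefficients `g`. -/
def jacobiMatrix (p : σ → k) (g : ι → σ → FreeAlgebra k σ) : Matrix ι σ k :=
  Matrix.of fun j i => FreeAlgebra.lift k p (g j i)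

lemma triangularRep_relation_eq_zero [Fintype σ] {f : ι → FreeAlgebra k σ} {p₁ p₂ : σ → k}
    {g : ι → σ → FreeAlgebra k σ} (hg : IsLeftDecomposition p₁ f g)
    (h₁ : ∀ j, FreeAlgebra.lift k p₁ (f j) = 0) (h₂ : ∀ j, FreeAlgebra.lift k p₂ (f j) = 0)
    {c : σ → k} (hc : (jacobiMatrix p₂ g).mulVec c = 0) (j : ι) :
    triangularRep p₁ p₂ c (f j) = 0 := by
  have corner : triangularRep p₁ p₂ c (f j) 0 1 = 0 := by
    rw [hg j, triangularRep_sum]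
    exact congrFun hc j
  rw [triangularRep_eq, corner, h₁, h₂]
  exact (Matrix.eta_fin_two 0).symm

end TriangularRepresentations

section Jacobi

open PresentedAlgebra

variable {k σ : Type u} {ι : Type*} [Field k] [Fintype σ] {f : ι → FreeAlgebra k σ}
  {p₁ p₂ : σ → k} {g : ι → σ → FreeAlgebra k σ}
  (h₁ : ∀ j, FreeAlgebra.lift k p₁ (f j) = 0) (h₂ : ∀ j, FreeAlgebra.lift k p₂ (f j) = 0)

lemma sum_smul_recenter_gen (hg : IsLeftDecomposition p₁ f g) (j : ι) :
    ∑ i, mk f (g j i) • recenter (pointChar p₁ h₁) (gen f i) = 0 := by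
  ext
  calc (↑(∑ i, mk f (g j i) • recenter (pointChar p₁ h₁) (gen f i)) : PresentedAlgebra f)
      = mk f (∑ i, g j i * (FreeAlgebra.ι k i - algebraMap k (FreeAlgebra k σ) (p₁ i))) := by
        simp only [recenter, gen, pointChar_mk, FreeAlgebra.lift_ι_apply, map_sum, map_mul,
          map_sub, AlgHom.commutes, Submodule.coe_sum, Submodule.coe_smul, smul_eq_mul]
    _ = 0 := by rw [← hg j, mk_relation]

lemma jacobiMatrix_mulVec_evalRecentered (hg : IsLeftDecomposition p₁ f g)
    (φ : ModuleCat.of (PresentedAlgebra f) (augmentationIdeal (pointChar p₁ h₁)) ⟶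
      charModule (pointChar p₂ h₂)) :
    (jacobiMatrix p₂ g).mulVec
      (evalRecentered (pointChar p₁ h₁) (pointChar p₂ h₂) (gen f) φ) = 0 := by
  funext j
  calc ∑ i, FreeAlgebra.lift k p₂ (g j i) *
        charModuleEquiv (pointChar p₂ h₂) (φ.hom (recenter (pointChar p₁ h₁) (gen f i)))
      = charModuleEquiv (pointChar p₂ h₂)
          (φ.hom (∑ i, mk f (g j i) • recenter (pointChar p₁ h₁) (gen f i))) := by
        simp only [map_sum, map_smul, charModuleEquiv_smul, pointChar_mk]
    _ = 0 := by rw [sum_smul_recenter_gen h₁ hg j, map_zero, map_zero]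

lemma exists_evalRecentered_eq (hg : IsLeftDecomposition p₁ f g) {c : σ → k}
    (hc : (jacobiMatrix p₂ g).mulVec c = 0) :
    ∃ φ, evalRecentered (pointChar p₁ h₁) (pointChar p₂ h₂) (gen f) φ = c := by
  let τ := lift (triangularRep p₁ p₂ c) (triangularRep_relation_eq_zero hg h₁ h₂ hc)
  have hτ (a : PresentedAlgebra f) :
      τ a = !![pointChar p₂ h₂ a, τ a 0 1; 0, pointChar p₁ h₁ a] := by
    obtain ⟨a, rfl⟩ := mk_surjective f a
    simp only [τ, lift_mk, pointChar_mk]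
    exact triangularRep_eq p₁ p₂ c a
  refine ⟨ModuleCat.ofHom (Y := charModule _) (cornerHom _ _ τ hτ), funext fun i => ?_⟩
  calc τ (gen f i - algebraMap k (PresentedAlgebra f) (pointChar p₁ h₁ (gen f i))) 0 1
      = triangularRep p₁ p₂ c (FreeAlgebra.ι k i) 0 1 := by
        simp [τ, gen, lift_mk, Matrix.algebraMap_matrix_apply]
    _ = c i := by simp [triangularRep]

lemma range_evalRecentered_pointChar (hg : IsLeftDecomposition p₁ f g) :
    LinearMap.range (evalRecentered (pointChar p₁ h₁) (pointChar p₂ h₂) (gen f)) =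
      LinearMap.ker (jacobiMatrix p₂ g).mulVecLin := by
  refine le_antisymm ?_ fun c hc => exists_evalRecentered_eq h₁ h₂ hg hc
  rintro _ ⟨φ, rfl⟩
  exact jacobiMatrix_mulVec_evalRecentered h₁ h₂ hg φ

lemma finrank_ext_one_pointChar_add (hg : IsLeftDecomposition p₁ f g) :
    Module.finrank k (((Ext k (ModuleCat.{u} (PresentedAlgebra f)) 1).obj
        (op (charModule (pointChar p₁ h₁)))).obj (charModule (pointChar p₂ h₂))) +
      Module.finrank k (Submodule.span k {p₂ - p₁}) + (jacobiMatrix p₂ g).rank =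
      Fintype.card σ := by
  have hdiff : (fun i => pointChar p₂ h₂ (gen f i) - pointChar p₁ h₁ (gen f i)) = p₂ - p₁ := by
    funext i
    rw [pointChar_gen, pointChar_gen, Pi.sub_apply]
  rw [← hdiff, finrank_ext_one_charModule_add _ _ (adjoin_range_gen f),
    range_evalRecentered_pointChar h₁ h₂ hg, Matrix.rank, add_comm,
    LinearMap.finrank_range_add_finrank_ker, Module.finrank_fintype_fun_eq_card]

theorem ext_dim_eq_corank_of_jacobi_matrix_general (hg : IsLeftDecomposition p₁ f g) :
    (p₁ ≠ p₂ → Module.finrank k (((Ext k (ModuleCat.{u} (PresentedAlgebra f)) 1).obj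
        (op (charModule (pointChar p₁ h₁)))).obj (charModule (pointChar p₂ h₂))) =
      Fintype.card σ - 1 - (jacobiMatrix p₂ g).rank) ∧
    (p₁ = p₂ → Module.finrank k (((Ext k (ModuleCat.{u} (PresentedAlgebra f)) 1).obj
        (op (charModule (pointChar p₁ h₁)))).obj (charModule (pointChar p₂ h₂))) =
      Fintype.card σ - (jacobiMatrix p₂ g).rank) := by
  have count := finrank_ext_one_pointChar_add h₁ h₂ hg
  constructor
  · intro hne
    rw [finrank_span_singleton (sub_ne_zero.2 hne.symm)] at count
    omega
  · rintro rfl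
    rw [sub_self, Submodule.span_zero_singleton, finrank_bot] at count
    omega

end Jacobi

/-- the dimension of `Ext¹_A(k(p₁), k(p₂))` is computed by the rank of the
noncommutative Jacobi matrix of the presentation, evaluated at `p₂`. -/
theorem ext_dim_eq_corank_of_jacobi_matrix
    (k : Type) [Field k] (m r : ℕ)
    (f : Fin r → FreeAlgebra k (Fin m)) (p₁ p₂ : Fin m → k)
    (h₁ : ∀ j, evalAt k m p₁ (f j) = 0) (h₂ : ∀ j, evalAt k m p₂ (f j) = 0)
    (g : Fin r → Fin m → FreeAlgebra k (Fin m))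
    (hg : ∀ j, f j = ∑ i : Fin m,
      g j i * (FreeAlgebra.ι k i - algebraMap k (FreeAlgebra k (Fin m)) (p₁ i)))
    (J : Matrix (Fin r) (Fin m) k) (hJ : ∀ j i, J j i = evalAt k m p₂ (g j i)) :
    (p₁ ≠ p₂ → Module.finrank k
        (Ext1 k (quotAlgF k m r f) (pointModF k m r f p₁ h₁) (pointModF k m r f p₂ h₂))
      = m - 1 - J.rank) ∧
    (p₁ = p₂ → Module.finrank k
        (Ext1 k (quotAlgF k m r f) (pointModF k m r f p₁ h₁) (pointModF k m r f p₂ h₂))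
      = m - J.rank) := by
  obtain rfl : J = jacobiMatrix p₂ g := Matrix.ext hJ
  have h := ext_dim_eq_corank_of_jacobi_matrix_general h₁ h₂ hg
  rw [Fintype.card_fin] at h
  -- `pointModF k m r f p h` and `charModule (pointChar p h)` agree definitionally.
  exact h

end
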